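/- Let K be a division ring, R = K[t], and f = tⁿ + b_{n−1}t^{n−1} + ⋯ + b_0 ∈ R with n ≥ 1, with companion matrix C(f) ∈ M_n(K). Then the following are equivalent: (1) f is a product of linear factors in R and R/Rf is a semisimple left R-module; (2) there exist c_1,…,c_n ∈ K such that the Vandermonde matrix V = (c_j^{\,i−1})_{1≤i,j≤n} (whose i-th row is (c_1^{i−1},…,c_n^{i−1})) is invertible over K and C(f)·V = V·diag(c_1,…,c_n). -/

import Mathlib

/-!
Write `p(c)` for `Polynomial.eval c p = ∑ pᵢ cⁱ`; over a division ring `p(c) = 0` means exactly that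
`p` lies in the left ideal `R(t - c)`. The equation `C(f) V = V diag(c)` says that every `cⱼ` is a
root of `f`, and `V` is invertible exactly when the `cⱼ` are *independent*: no nonzero polynomial of
degree `< n` vanishes at all of them. So the second condition asks for `n` independent roots of `f`.

Given such roots, `p ↦ (p mod R(t - cⱼ))ⱼ` embeds `R/Rf` in a finite product of simple modules, so
`R/Rf` is semisimple. Moreover, multiplying by `t - g(c) c g(c)⁻¹` on the left makes `g` vanish at a
further point `c`, so some product of at most `n` linear factors vanishes at all `cⱼ`; by
independence it equals `f` (`exists_prod_vanishing`).

Conversely, if `R/Rf` is semisimple its radical is zero, so `Rf` is an intersection of maximal left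
ideals. When `f` splits, each maximal left ideal containing `f` contains some `t - c`
(`exists_X_sub_C_mem`), where `c` is a root of `f`. Hence a polynomial vanishing at all roots of
`f` is in `Rf`, and a dimension count extracts `n` independent roots (`exists_separating`).
-/

open Polynomial

/-- The companion matrix of a monic polynomial `f = tⁿ + b_{n−1}t^{n−1} + ⋯ + b₀`:
`1`'s on the superdiagonal and last row `(−b₀, …, −b_{n−1})`. -/
def companionMatrix {K : Type*} [DivisionRing K] (n : ℕ) (f : K[X]) :
    Matrix (Fin n) (Fin n) K :=
  Matrix.of fun i j =>
    if (i : ℕ) + 1 = n then -f.coeff (j : ℕ)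
    else if (j : ℕ) = (i : ℕ) + 1 then 1 else 0

/-- The Vandermonde matrix whose `i`-th row is `(c₁^{i−1}, …, cₙ^{i−1})`. -/
def vandermondeMatrix {K : Type*} [DivisionRing K] (n : ℕ) (c : Fin n → K) :
    Matrix (Fin n) (Fin n) K :=
  Matrix.of fun i j => c j ^ (i : ℕ)

section Helpers

variable {K : Type*} [DivisionRing K]

/-- Division with the monic divisor on the right; Mathlib's `divByMonic` puts it on the left. -/
lemma exists_right_division {f : K[X]} (hf : f.Monic) (p : K[X]) :
    ∃ q r : K[X], p = q * f + r ∧ r.degree < f.degree := by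
  induction hd : p.degree using WellFoundedLT.induction generalizing p with
  | ind d ih =>
    by_cases hlt : p.degree < f.degree
    · exact ⟨0, p, by simp, hlt⟩
    have hle : f.degree ≤ p.degree := not_lt.mp hlt
    have hp0 : p ≠ 0 := by
      rintro rfl
      exact hf.ne_zero (degree_eq_bot.mp (by simpa using hle))
    have hnat : f.natDegree ≤ p.natDegree := natDegree_le_natDegree hle
    set m : K[X] := C p.leadingCoeff * X ^ (p.natDegree - f.natDegree) with hm
    have hlc : p.leadingCoeff ≠ 0 := leadingCoeff_ne_zero.mpr hp0
    have hdeg : (m * f).degree = p.degree := by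
      rw [degree_mul, hm, degree_C_mul_X_pow _ hlc, degree_eq_natDegree hf.ne_zero,
        degree_eq_natDegree hp0, ← Nat.cast_add, Nat.sub_add_cancel hnat]
    have hlead : p.leadingCoeff = (m * f).leadingCoeff := by
      rw [leadingCoeff_mul, hf.leadingCoeff, hm, leadingCoeff_C_mul_X_pow, mul_one]
    obtain ⟨q, r, hqr, hr⟩ := ih _ (hd ▸ degree_sub_lt_left hdeg.symm hp0 hlead) (p - m * f) rfl
    exact ⟨q + m, r, by rw [add_mul, add_right_comm, ← hqr, sub_add_cancel], hr⟩

lemma exists_eq_mul_X_sub_C_add (c : K) (p : K[X]) :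
    ∃ q : K[X], p = q * (X - C c) + C (p.eval c) := by
  obtain ⟨q, r, hp, hr⟩ := exists_right_division (monic_X_sub_C c) p
  rw [degree_X_sub_C] at hr
  have hrC := eq_C_of_degree_le_zero (Nat.WithBot.lt_one_iff_le_zero.mp hr)
  refine ⟨q, ?_⟩
  have : p.eval c = r.coeff 0 := by
    rw [hp, eval_add, eval_mul_X_sub_C, hrC]; simp
  rw [this, ← hrC, ← hp]

lemma mem_span_X_sub_C_iff (c : K) (p : K[X]) :
    p ∈ (Submodule.span K[X] {X - C c} : Submodule K[X] K[X]) ↔ p.eval c = 0 := by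
  rw [Submodule.mem_span_singleton]
  constructor
  · rintro ⟨q, rfl⟩
    exact eval_mul_X_sub_C c
  · intro h
    obtain ⟨q, hq⟩ := exists_eq_mul_X_sub_C_add c p
    exact ⟨q, by rw [hq, h]; simp⟩

/-- A proper left ideal contains no nonzero constant. -/
lemma eq_zero_of_C_mem {M : Submodule K[X] K[X]} (hM : M ≠ ⊤) {a : K} (ha : C a ∈ M) :
    a = 0 := by
  by_contra h
  refine hM ((Ideal.eq_top_iff_one M).mpr ?_)
  have := M.smul_mem (C a⁻¹) ha
  rwa [smul_eq_mul, ← C_mul, inv_mul_cancel₀ h, C_1] at this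

lemma isCoatom_span_X_sub_C (c : K) :
    IsCoatom (Submodule.span K[X] {X - C c} : Submodule K[X] K[X]) := by
  refine ⟨fun h => ?_, fun N hN => ?_⟩
  · have : (1 : K[X]) ∈ (Submodule.span K[X] {X - C c} : Submodule K[X] K[X]) := by
      rw [h]; trivial
    rw [mem_span_X_sub_C_iff] at this
    simp at this
  · obtain ⟨hle, p, hpN, hp⟩ := SetLike.lt_iff_le_and_exists.mp hN
    rw [mem_span_X_sub_C_iff] at hp
    by_contra htop
    obtain ⟨q, hq⟩ := exists_eq_mul_X_sub_C_add c p
    refine hp (eq_zero_of_C_mem htop ?_)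
    have h1 : q * (X - C c) ∈ N := N.smul_mem q (hle (Submodule.mem_span_singleton_self _))
    rw [eq_sub_of_add_eq' hq.symm]
    exact N.sub_mem hpN h1

/-- Some product of at most `k` linear factors vanishes at `k` given points: to make `g` vanish at a
further point `c` with `a = g(c) ≠ 0`, multiply it on the left by `t - a c a⁻¹`. -/
lemma exists_prod_vanishing (l : List K) :
    ∃ L : List K, L.length ≤ l.length ∧
      ∀ c ∈ l, ((L.map fun a => X - C a).prod).eval c = 0 := by
  induction l with
  | nil => exact ⟨[], by simp⟩
  | cons c l ih =>
    obtain ⟨L, hlen, hL⟩ := ih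
    set g := (L.map fun a => (X - C a : K[X])).prod with hg
    have key (b d : K) : ((X - C b) * g).eval d = g.eval d * d - b * g.eval d := by
      rw [sub_mul, X_mul, eval_sub, eval_mul_X, eval_C_mul]
    by_cases h0 : g.eval c = 0
    · refine ⟨L, by simp; lia, ?_⟩
      exact List.forall_mem_cons.mpr ⟨h0, hL⟩
    · refine ⟨(g.eval c * c * (g.eval c)⁻¹) :: L, by simpa using hlen, ?_⟩
      intro d hd
      rw [List.map_cons, List.prod_cons, key]
      rcases List.mem_cons.mp hd with rfl | hd
      · rw [inv_mul_cancel_right₀ h0, sub_self]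
      · rw [hL d hd]; simp

lemma monic_prod_linear (L : List K) :
    ((L.map fun a => (X - C a : K[X])).prod).Monic := by
  induction L with
  | nil => simp
  | cons a L ih =>
    rw [List.map_cons, List.prod_cons]
    exact (monic_X_sub_C a).mul ih

lemma natDegree_prod_linear (L : List K) :
    ((L.map fun a => (X - C a : K[X])).prod).natDegree = L.length := by
  induction L with
  | nil => simp
  | cons a L ih =>
    rw [List.map_cons, List.prod_cons, (monic_X_sub_C a).natDegree_mul (monic_prod_linear L), ih,
      natDegree_X_sub_C, List.length_cons, add_comm]

/-- If a product of linear factors lies in the maximal left ideal `M`, then `R/M` is a quotient of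
some `R/R(t - a)`, hence one-dimensional over `K`, and so `t ≡ c` modulo `M` for some constant `c`. -/
lemma exists_X_sub_C_mem {M : Submodule K[X] K[X]} (hM : IsCoatom M) (L : List K)
    (hL : (L.map fun a => (X - C a : K[X])).prod ∈ M) : ∃ c : K, X - C c ∈ M := by
  induction L with
  | nil => exact absurd ((Ideal.eq_top_iff_one M).mpr (by simpa using hL)) hM.1
  | cons a L ih =>
    rw [List.map_cons, List.prod_cons] at hL
    set g := (L.map fun a => (X - C a : K[X])).prod with hg
    by_cases hgM : g ∈ M
    · exact ih hgM
    -- the class of `g` spans `R/M` over `K`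
    have hspan (p : K[X]) : ∃ b : K, p - C b * g ∈ M := by
      have htop : M ⊔ Submodule.span K[X] {g} = ⊤ := by
        refine hM.2 _ (lt_of_le_of_ne le_sup_left fun h => hgM ?_)
        rw [h]
        exact Submodule.mem_sup_right (Submodule.mem_span_singleton_self g)
      have hp : p ∈ M ⊔ Submodule.span K[X] {g} := htop ▸ Submodule.mem_top
      obtain ⟨m, hm, y, hy, rfl⟩ := Submodule.mem_sup.mp hp
      obtain ⟨q, rfl⟩ := Submodule.mem_span_singleton.mp hy
      obtain ⟨q', hq'⟩ := exists_eq_mul_X_sub_C_add a q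
      refine ⟨q.eval a, ?_⟩
      have : m + q • g - C (q.eval a) * g = m + q' • ((X - C a) * g) := by
        conv_lhs => rw [smul_eq_mul, add_sub_assoc, ← sub_mul, sub_eq_of_eq_add hq']
        rw [smul_eq_mul, mul_assoc]
      rw [this]
      exact M.add_mem hm (M.smul_mem _ hL)
    obtain ⟨u, hu⟩ := hspan 1
    obtain ⟨v, hv⟩ := hspan X
    have hu0 : u ≠ 0 := by
      rintro rfl
      exact hM.1 ((Ideal.eq_top_iff_one M).mpr (by simpa using hu))
    refine ⟨v * u⁻¹, ?_⟩
    have h := M.sub_mem hv (M.smul_mem (C (v * u⁻¹)) hu)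
    have e : C (v * u⁻¹) * (C u * g) = C v * g := by
      rw [← mul_assoc, ← C_mul, inv_mul_cancel_right₀ hu0]
    rwa [smul_eq_mul, mul_sub, mul_one, e, sub_sub_sub_cancel_right] at h

/-- If `R/Rf` is semisimple and `f` splits, then a polynomial vanishing at all roots of `f` is a
left multiple of `f`. -/
lemma mem_span_of_vanishing {f : K[X]}
    (hL : ∃ L : List K, f = (L.map fun a => X - C a).prod)
    (hss : IsSemisimpleModule K[X]
        (K[X] ⧸ (Submodule.span K[X] {f} : Submodule K[X] K[X])))
    {p : K[X]} (hp : ∀ c, f.eval c = 0 → p.eval c = 0) :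
    p ∈ (Submodule.span K[X] {f} : Submodule K[X] K[X]) := by
  obtain ⟨L, hL⟩ := hL
  have hjac := IsSemisimpleModule.jacobson_eq_bot K[X]
    (K[X] ⧸ (Submodule.span K[X] {f} : Submodule K[X] K[X]))
  rw [← Submodule.Quotient.mk_eq_zero, ← Submodule.mem_bot K[X], ← hjac, Module.jacobson,
    Submodule.mem_sInf]
  intro N hN
  have hM := (Submodule.isCoatom_comap_iff (Submodule.mkQ_surjective
    (Submodule.span K[X] {f} : Submodule K[X] K[X]))).mpr hN
  set M := N.comap (Submodule.mkQ (Submodule.span K[X] {f} : Submodule K[X] K[X])) with hMdef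
  change p ∈ M
  have hfM : f ∈ M := by
    have : Submodule.Quotient.mk (p := (Submodule.span K[X] {f} : Submodule K[X] K[X])) f = 0 :=
      (Submodule.Quotient.mk_eq_zero _).mpr (Submodule.mem_span_singleton_self f)
    rw [hMdef, Submodule.mem_comap, Submodule.mkQ_apply, this]
    exact N.zero_mem
  obtain ⟨c, hc⟩ := exists_X_sub_C_mem hM L (hL ▸ hfM)
  have hfc : f.eval c = 0 := by
    obtain ⟨q, hq⟩ := exists_eq_mul_X_sub_C_add c f
    refine eq_zero_of_C_mem hM.1 ?_
    rw [eq_sub_of_add_eq' hq.symm]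
    exact M.sub_mem hfM (M.smul_mem q hc)
  obtain ⟨q, hq⟩ := exists_eq_mul_X_sub_C_add c p
  rw [hq, hp c hfc, C_0, add_zero]
  exact M.smul_mem q hc

/-- From a family of functionals with no common zero on a space `W` of dimension at most `k`, one
can select `k` with no common zero: each choice cuts the dimension by at least one. Repetitions are
allowed. -/
lemma exists_separating {V ι : Type*} [AddCommGroup V] [Module K V] [FiniteDimensional K V]
    [Nonempty ι] (φ : ι → V →ₗ[K] K) (k : ℕ) (W : Submodule K V)
    (hk : Module.finrank K W ≤ k) (hW : ∀ w ∈ W, (∀ i, φ i w = 0) → w = 0) :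
    ∃ s : Fin k → ι, ∀ w ∈ W, (∀ j, φ (s j) w = 0) → w = 0 := by
  induction k generalizing W with
  | zero =>
    have hbot : W = ⊥ := Submodule.finrank_eq_zero.mp (Nat.le_zero.mp hk)
    exact ⟨Fin.elim0, fun w hw _ => by rwa [hbot, Submodule.mem_bot] at hw⟩
  | succ k ih =>
    by_cases hbot : W = ⊥
    · exact ⟨fun _ => Classical.arbitrary ι, fun w hw _ => by
        rwa [hbot, Submodule.mem_bot] at hw⟩
    obtain ⟨w, hw, hw0⟩ := W.ne_bot_iff.mp hbot
    obtain ⟨i, hi⟩ : ∃ i, φ i w ≠ 0 := by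
      by_contra! h
      exact hw0 (hW w hw h)
    have hlt : W ⊓ LinearMap.ker (φ i) < W := by
      refine lt_of_le_of_ne inf_le_left fun h => hi ?_
      rw [← h] at hw
      exact hw.2
    have := Submodule.finrank_lt_finrank_of_lt hlt
    obtain ⟨s, hs⟩ := ih (W ⊓ LinearMap.ker (φ i)) (by lia) fun w hw h => hW w hw.1 h
    refine ⟨Fin.cons i s, fun w hw h => hs w ⟨hw, ?_⟩ fun j => ?_⟩
    · simpa using h 0
    · simpa using h j.succ

/-- Over a division ring, a square matrix `A` has a two-sided inverse exactly when `w ↦ w A` is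
injective on row vectors. -/
lemma exists_inverse_iff {n : ℕ} (A : Matrix (Fin n) (Fin n) K) :
    (∃ W : Matrix (Fin n) (Fin n) K, A * W = 1 ∧ W * A = 1) ↔
      ∀ w : Fin n → K, Matrix.vecMul w A = 0 → w = 0 := by
  constructor
  · rintro ⟨W, hW, -⟩ w hw
    rw [← Matrix.vecMul_one w, ← hW, ← Matrix.vecMul_vecMul, hw, Matrix.zero_vecMul]
  · intro h
    have hinj : Function.Injective (Matrix.vecMulLinear A) :=
      (injective_iff_map_eq_zero _).mpr h
    have hsurj := LinearMap.injective_iff_surjective.mp hinj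
    choose W hW using fun i : Fin n => hsurj (Pi.single i 1)
    have hWA : Matrix.of W * A = 1 := by
      ext i j
      have := congrFun (hW i) j
      rw [Matrix.vecMulLinear_apply] at this
      rw [Matrix.mul_apply_eq_vecMul, Matrix.one_eq_pi_single]
      exact this
    refine ⟨Matrix.of W, ?_, hWA⟩
    -- `(A W - 1) A = 0`, and the rows of `A W - 1` are killed one at a time
    have h0 : (A * Matrix.of W - 1) * A = 0 := by
      rw [sub_mul, Matrix.mul_assoc, hWA, Matrix.mul_one, Matrix.one_mul, sub_self]
    refine sub_eq_zero.mp ?_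
    ext i j
    have := h ((A * Matrix.of W - 1) i) (by
      rw [← Matrix.mul_apply_eq_vecMul, h0]; rfl)
    exact congrFun this j

/-- The Vandermonde matrix is invertible exactly when its nodes are independent. -/
lemma vandermonde_invertible_iff {n : ℕ} (c : Fin n → K) :
    (∃ W : Matrix (Fin n) (Fin n) K,
        vandermondeMatrix n c * W = 1 ∧ W * vandermondeMatrix n c = 1) ↔
      ∀ p ∈ degreeLT K n, (∀ j, p.eval (c j) = 0) → p = 0 := by
  rw [exists_inverse_iff]
  have hev (p : degreeLT K n) (j : Fin n) :
      Matrix.vecMul (degreeLTEquiv K n p) (vandermondeMatrix n c) j = (p : K[X]).eval (c j) := by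
    rw [eval_eq_sum_degreeLTEquiv p.2]
    rfl
  constructor
  · intro h p hp hpc
    rw [← degreeLTEquiv_eq_zero_iff_eq_zero hp]
    refine h _ (funext fun j => ?_)
    rw [hev]
    exact hpc j
  · intro h w hw
    obtain ⟨p, rfl⟩ := (degreeLTEquiv K n).surjective w
    have : (p : K[X]) = 0 := h p p.2 fun j => by rw [← hev, hw]; rfl
    rw [Submodule.coe_eq_zero.mp this, map_zero]

lemma companion_mul_vandermonde_iff {n : ℕ} (hn : 1 ≤ n) {f : K[X]}
    (hmonic : f.Monic) (hdeg : f.natDegree = n) (c : Fin n → K) :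
    companionMatrix n f * vandermondeMatrix n c =
        vandermondeMatrix n c * Matrix.diagonal c ↔ ∀ j, f.eval (c j) = 0 := by
  have heval (x : K) : f.eval x = (∑ i : Fin n, f.coeff i * x ^ (i : ℕ)) + x ^ n := by
    rw [eval_eq_sum_range, hdeg, Finset.sum_range_succ, Finset.sum_range, ← hdeg,
      hmonic.coeff_natDegree, one_mul]
  have hent (i j : Fin n) : (companionMatrix n f * vandermondeMatrix n c) i j =
      if (i : ℕ) + 1 = n then - ∑ k : Fin n, f.coeff k * c j ^ (k : ℕ)
      else c j ^ ((i : ℕ) + 1) := by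
    rw [Matrix.mul_apply]
    simp only [companionMatrix, vandermondeMatrix, Matrix.of_apply]
    split_ifs with h
    · simp
    · have hi : (i : ℕ) + 1 < n := by have := i.2; lia
      rw [Finset.sum_eq_single (⟨(i : ℕ) + 1, hi⟩ : Fin n)]
      · simp
      · intro b _ hb
        rw [if_neg (fun h' => hb (Fin.ext h')), zero_mul]
      · simp
  have hent' (i j : Fin n) : (vandermondeMatrix n c * Matrix.diagonal c) i j =
      c j ^ ((i : ℕ) + 1) := by
    rw [Matrix.mul_diagonal, pow_succ]
    rfl
  constructor
  · intro h j
    have := congrFun (congrFun h ⟨n - 1, by lia⟩) j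
    have hn' : n - 1 + 1 = n := by lia
    rw [hent, hent'] at this
    simp only [hn', if_true] at this
    rw [heval, ← this, add_neg_cancel]
  · intro h
    ext i j
    rw [hent, hent']
    split_ifs with hi
    · have := h j
      rw [heval] at this
      rw [hi]
      exact neg_eq_of_add_eq_zero_right this
    · rfl

end Helpers

/-- For monic `f` of degree `n ≥ 1`, the following are equivalent:
(1) `f` is a product of linear factors and `R/Rf` is a semisimple left `R`-module;
(2) there are `c₁, …, cₙ ∈ K` with the Vandermonde matrix `V = (cⱼ^{i−1})` invertible
and `C(f)·V = V·diag(c₁, …, cₙ)`. -/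
theorem stmt7 {K : Type*} [DivisionRing K] (n : ℕ) (hn : 1 ≤ n) (f : K[X])
    (hmonic : f.Monic) (hdeg : f.natDegree = n) :
    ((∃ L : List K, f = (L.map fun a => X - C a).prod) ∧
      IsSemisimpleModule K[X]
        (K[X] ⧸ (Submodule.span K[X] {f} : Submodule K[X] K[X]))) ↔
    (∃ c : Fin n → K,
      (∃ W : Matrix (Fin n) (Fin n) K,
        vandermondeMatrix n c * W = 1 ∧ W * vandermondeMatrix n c = 1) ∧
      companionMatrix n f * vandermondeMatrix n c =
        vandermondeMatrix n c * Matrix.diagonal c) := by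
  simp only [vandermonde_invertible_iff, companion_mul_vandermonde_iff hn hmonic hdeg]
  have hfdeg : f.degree = n := by rw [degree_eq_natDegree hmonic.ne_zero, hdeg]
  constructor
  · rintro ⟨hL, hss⟩
    have hsep (p : K[X]) (hp : p ∈ degreeLT K n) (hpc : ∀ c, f.eval c = 0 → p.eval c = 0) :
        p = 0 := by
      obtain ⟨q, hq⟩ := Submodule.mem_span_singleton.mp (mem_span_of_vanishing hL hss hpc)
      rw [mem_degreeLT, ← hq, smul_eq_mul] at hp
      have hq0 : q = 0 := by
        by_contra hq0
        rw [degree_mul, hfdeg, degree_eq_natDegree hq0, ← Nat.cast_add, Nat.cast_lt] at hp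
        lia
      rw [← hq, hq0, zero_smul]
    have hne : Nonempty {c : K // f.eval c = 0} := by
      by_contra hne
      refine one_ne_zero (hsep 1 ?_ fun c hc => (hne ⟨c, hc⟩).elim)
      rw [mem_degreeLT, degree_one]
      exact_mod_cast hn
    have hfd : FiniteDimensional K (degreeLT K n) :=
      Module.Finite.equiv (degreeLTEquiv K n).symm
    have hrank : Module.finrank K (⊤ : Submodule K (degreeLT K n)) ≤ n := by
      rw [finrank_top, (degreeLTEquiv K n).finrank_eq, Module.finrank_fin_fun]
    obtain ⟨s, hs⟩ := exists_separating
      (fun c : {c : K // f.eval c = 0} => (leval c.1).comp (degreeLT K n).subtype) n ⊤ hrank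
      (fun w _ hw => Subtype.ext (hsep w w.2 fun c hc => hw ⟨c, hc⟩))
    exact ⟨fun j => (s j).1, fun p hp hpc =>
      congrArg Subtype.val (hs ⟨p, hp⟩ trivial hpc), fun j => (s j).2⟩
  · rintro ⟨c, hind, hroot⟩
    constructor
    · obtain ⟨L, hlen, hL⟩ := exists_prod_vanishing (List.ofFn c)
      rw [List.length_ofFn] at hlen
      refine ⟨L, ?_⟩
      have hPm := monic_prod_linear L
      have hPd := natDegree_prod_linear L
      set P := (L.map fun a => (X - C a : K[X])).prod with hP
      have hPc (j : Fin n) : P.eval (c j) = 0 := hL _ (by simp)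
      have hPdeg : P.degree = L.length := by rw [degree_eq_natDegree hPm.ne_zero, hPd]
      have hlen' : L.length = n := by
        refine le_antisymm hlen (not_lt.mp fun hlt => hPm.ne_zero (hind P ?_ hPc))
        rw [mem_degreeLT, hPdeg]
        exact_mod_cast hlt
      refine sub_eq_zero.mp (hind (f - P) ?_ fun j => by rw [eval_sub, hroot, hPc, sub_zero])
      rw [mem_degreeLT, ← hfdeg]
      exact degree_sub_lt_left (by rw [hfdeg, hPdeg, hlen']) hmonic.ne_zero
        (by rw [hmonic.leadingCoeff, hPm.leadingCoeff])
    · have hsimple (j : Fin n) : IsSimpleModule K[X]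
          (K[X] ⧸ (Submodule.span K[X] {X - C (c j)} : Submodule K[X] K[X])) :=
        isSimpleModule_iff_isCoatom.mpr (isCoatom_span_X_sub_C (c j))
      let Φ : K[X] →ₗ[K[X]] ((j : Fin n) →
          (K[X] ⧸ (Submodule.span K[X] {X - C (c j)} : Submodule K[X] K[X]))) :=
        LinearMap.pi fun j => Submodule.mkQ _
      have hΦ (p : K[X]) : Φ p = 0 ↔ ∀ j, p.eval (c j) = 0 := by
        rw [funext_iff]
        refine forall_congr' fun j => ?_
        rw [← mem_span_X_sub_C_iff, ← Submodule.Quotient.mk_eq_zero]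
        rfl
      have hker : LinearMap.ker Φ = Submodule.span K[X] {f} := by
        refine le_antisymm (fun p hp => ?_) ?_
        · obtain ⟨q, r, hqr, hr⟩ := exists_right_division hmonic p
          have hqf : Φ (q * f) = 0 := by
            rw [← smul_eq_mul, map_smul, (hΦ f).mpr hroot, smul_zero]
          have hr0 : r = 0 := by
            refine hind r (by rwa [mem_degreeLT, ← hfdeg]) ((hΦ r).mp ?_)
            rwa [LinearMap.mem_ker, hqr, map_add, hqf, zero_add] at hp
          rw [hqr, hr0, add_zero]
          exact Submodule.smul_mem _ q (Submodule.mem_span_singleton_self f)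
        · rw [Submodule.span_singleton_le_iff_mem]
          exact (hΦ f).mpr hroot
      rw [← hker]
      exact IsSemisimpleModule.congr (M := LinearMap.range Φ) Φ.quotKerEquivRange
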